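/- For any constants α, β, λ > 0 with the product α·β sufficiently large, there exists a constant c > 0 such that the following holds: for every connected d-regular graph G = (V,E) with |V| = n vertices and d ≥ β·ln n, every source vertex s ∈ V, and every integer k ≥ 0, when both protocols are run with the same number of agents |A| ≥ α·n, the broadcast times satisfy P[T_visitx(G,s) ≤ k + c·ln n] ≥ P[T_meetx(G,s) ≤ k] − n^{−λ}. -/

import Mathlib

/-!
Both protocols are run on the same walks. Agents informed in meet-exchange are informed in
visit-exchange by the same round (`mx_subset_vx`), so if meet-exchange has informed every agent by
round `k`, visit-exchange has informed every vertex that some agent visits in rounds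
`k + 1, …, k + T`. It remains to see that, with `T = ⌊(β + 2) ln n⌋`, these rounds visit all
vertices with probability at least `1 - n ^ (-λ)`.

Fix a vertex `v` and one stationary walk, and let `N` be its number of visits to `v` in these `T`
rounds. Stationarity gives `E N = T / n`. For `i < j` the last step before time `j` hits `v` with
probability at most `1 / d`, so `P(X_i = v, X_j = v) ≤ 1 / (n d)` and `E N² ≤ (T / n) B` with
`B = 1 + T / d`. Since `1[N = 0] ≤ (1 - N / B)²`, the walk misses `v` with probability at most
`1 - T / (n B)` (`oneExp_miss`). The walks are independent (`walksProb_forall`), so all of them miss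
`v` with probability at most `exp (-α T / B)`. As `T` and `d` are both at least `β ln n`, one has
`T / B ≥ β ln n / 2`, and `αβ ≥ 2 (1 + λ)` makes this at most `n ^ (-(1 + λ))`; a union bound over
the `n` vertices finishes the proof.
-/

open Finset
open scoped Classical ENNReal

noncomputable section

namespace Rumor

variable {V : Type*} {A : Type*}

/-- Probability weight of `u` as a uniformly random neighbor of `v` in `G`
(`1/deg v` if `u` is a neighbor of `v`, and `0` otherwise). -/
def nbrW [Fintype V] (G : SimpleGraph V) (v u : V) : ℝ :=
  if G.Adj v u then 1 / (G.degree v : ℝ) else 0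

/-- Probability weight of a lazy simple random walk step from `v` to `u`
(stay put with probability `1/2`, otherwise move to a uniform neighbor). -/
def lazyW [Fintype V] (G : SimpleGraph V) (v u : V) : ℝ :=
  if u = v then 1 / 2 else if G.Adj v u then 1 / (2 * (G.degree v : ℝ)) else 0

/-- Stationary distribution of the simple random walk on `G`:
vertex `v` has probability `deg v / (2 |E|)`. -/
def statW [Fintype V] (G : SimpleGraph V) (v : V) : ℝ :=
  (G.degree v : ℝ) / ∑ u : V, (G.degree u : ℝ)

/-- Informed vertices of the PUSH protocol with source `s` after `t` rounds,
when in round `t+1` each vertex `u` sends the rumor to the vertex `σ t u`. -/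
def pushInf (s : V) (σ : ℕ → V → V) : ℕ → Set V
  | 0 => {s}
  | t + 1 => pushInf s σ t ∪ (σ t) '' pushInf s σ t

/-- Informed vertices of the PUSH-PULL protocol with source `s` after `t` rounds,
when in round `t+1` each vertex `u` contacts the vertex `σ t u`. -/
def ppullInf (s : V) (σ : ℕ → V → V) : ℕ → Set V
  | 0 => {s}
  | t + 1 => ppullInf s σ t ∪ (σ t) '' ppullInf s σ t ∪ {v | σ t v ∈ ppullInf s σ t}

/-- Extend finite-horizon driving noise to all times (by the identity). -/
def extV {k : ℕ} (σ : Fin k → V → V) : ℕ → V → V :=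
  fun t => if h : t < k then σ ⟨t, h⟩ else id

/-- `P[T_push(G,s) ≤ k]`: the probability that all vertices are informed within `k`
rounds of the PUSH protocol on `G` with source `s`, where in each round every vertex
samples an independent uniformly random neighbor. -/
def pushProbLe [Fintype V] (G : SimpleGraph V) (s : V) (k : ℕ) : ℝ :=
  ∑ σ : Fin k → V → V,
    if pushInf s (extV σ) k = Set.univ then ∏ t : Fin k, ∏ v : V, nbrW G v (σ t v) else 0

/-- `P[T_ppull(G,s) ≤ k]` for the PUSH-PULL protocol. -/
def ppullProbLe [Fintype V] (G : SimpleGraph V) (s : V) (k : ℕ) : ℝ :=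
  ∑ σ : Fin k → V → V,
    if ppullInf s (extV σ) k = Set.univ then ∏ t : Fin k, ∏ v : V, nbrW G v (σ t v) else 0

/-- Position after `t` steps of the walk of agent `g`, started at `x0 g`, where at
round `t+1` the agent moves from its current position `v` to `σ t g v`. -/
def walk (x0 : A → V) (σ : ℕ → A → V → V) (g : A) : ℕ → V
  | 0 => x0 g
  | t + 1 => σ t g (walk x0 σ g t)

/-- Extend finite-horizon driving noise for the agents to all times. -/
def extAV {k : ℕ} (σ : Fin k → A → V → V) : ℕ → A → V → V :=
  fun t => if h : t < k then σ ⟨t, h⟩ else fun _ => id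

/-- Probability of the event `E` on the trajectories (up to time `k`) of independent
simple random walks on `G`, one for each agent in `A`, each started from an independent
sample of the stationary distribution. -/
def walksProb [Fintype V] [Fintype A] (G : SimpleGraph V) (k : ℕ)
    (E : (A → ℕ → V) → Prop) : ℝ :=
  ∑ x0 : A → V, ∑ σ : Fin k → A → V → V,
    if E (walk x0 (extAV σ)) then
      (∏ g : A, statW G (x0 g)) * ∏ t : Fin k, ∏ g : A, ∏ v : V, nbrW G v (σ t g v)
    else 0

/-- Probability of the event `E` on the trajectories (up to time `k`) of independent
*lazy* simple random walks on `G`, one for each agent in `A`, each started from an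
independent sample of the stationary distribution. -/
def walksLazyProb [Fintype V] [Fintype A] (G : SimpleGraph V) (k : ℕ)
    (E : (A → ℕ → V) → Prop) : ℝ :=
  ∑ x0 : A → V, ∑ σ : Fin k → A → V → V,
    if E (walk x0 (extAV σ)) then
      (∏ g : A, statW G (x0 g)) * ∏ t : Fin k, ∏ g : A, ∏ v : V, lazyW G v (σ t g v)
    else 0

/-- The pair (informed vertices, informed agents) of VISIT-EXCHANGE with source `s`
after `t` rounds, given agent trajectories `x`. -/
def vxInf (s : V) (x : A → ℕ → V) : ℕ → Set V × Set A
  | 0 => ({s}, {g | x g 0 = s})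
  | t + 1 =>
      let p := vxInf s x t
      (p.1 ∪ {v | ∃ g ∈ p.2, x g (t + 1) = v},
       p.2 ∪ {g | x g (t + 1) ∈ p.1 ∪ {v | ∃ g' ∈ p.2, x g' (t + 1) = v}})

/-- `P[T_visitx(G,s) ≤ k]`: probability that all vertices are informed within `k` rounds
of VISIT-EXCHANGE on `G` with source `s` and `a` agents. -/
def vxProbLe [Fintype V] (G : SimpleGraph V) (s : V) (a k : ℕ) : ℝ :=
  walksProb (A := Fin a) G k fun x => (vxInf s x k).1 = Set.univ

/-- The pair (informed agents, "the source has already informed some agent") of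
MEET-EXCHANGE with source `s` after `t` rounds, given agent trajectories `x`. -/
def mxInf (s : V) (x : A → ℕ → V) : ℕ → Set A × Prop
  | 0 => ({g | x g 0 = s}, ∃ g, x g 0 = s)
  | t + 1 =>
      let p := mxInf s x t
      (p.1 ∪ {g | ∃ g' ∈ p.1, x g' (t + 1) = x g (t + 1)} ∪ {g | ¬p.2 ∧ x g (t + 1) = s},
       p.2 ∨ ∃ g, x g (t + 1) = s)

/-- `P[T_meetx(G,s) ≤ k]`: probability that all agents are informed within `k` rounds of
MEET-EXCHANGE on `G` with source `s` and `a` agents (non-lazy walks). -/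
def mxProbLe [Fintype V] (G : SimpleGraph V) (s : V) (a k : ℕ) : ℝ :=
  walksProb (A := Fin a) G k fun x => (mxInf s x k).1 = Set.univ

/-- `P[T_meetx(G,s) ≤ k]` for MEET-EXCHANGE with lazy walks. -/
def mxLazyProbLe [Fintype V] (G : SimpleGraph V) (s : V) (a k : ℕ) : ℝ :=
  walksLazyProb (A := Fin a) G k fun x => (mxInf s x k).1 = Set.univ

/-- `E[T_push(G,s)] = ∑_{k≥0} P[T_push > k]`. -/
def pushET [Fintype V] (G : SimpleGraph V) (s : V) : ℝ≥0∞ :=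
  ∑' k : ℕ, ENNReal.ofReal (1 - pushProbLe G s k)

/-- `E[T_ppull(G,s)] = ∑_{k≥0} P[T_ppull > k]`. -/
def ppullET [Fintype V] (G : SimpleGraph V) (s : V) : ℝ≥0∞ :=
  ∑' k : ℕ, ENNReal.ofReal (1 - ppullProbLe G s k)

/-- `E[T_visitx(G,s)] = ∑_{k≥0} P[T_visitx > k]` with `a` agents. -/
def vxET [Fintype V] (G : SimpleGraph V) (s : V) (a : ℕ) : ℝ≥0∞ :=
  ∑' k : ℕ, ENNReal.ofReal (1 - vxProbLe G s a k)

/-- `E[T_meetx(G,s)] = ∑_{k≥0} P[T_meetx > k]` with `a` agents. -/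
def mxET [Fintype V] (G : SimpleGraph V) (s : V) (a : ℕ) : ℝ≥0∞ :=
  ∑' k : ℕ, ENNReal.ofReal (1 - mxProbLe G s a k)

end Rumor

namespace Rumor

/-! ### Comparison of the two protocols on fixed trajectories -/

section Coupling

variable {V : Type*} {A : Type*}

theorem vx_fst_source (s : V) (x : A → ℕ → V) (t : ℕ) : s ∈ (vxInf s x t).1 := by
  induction t with
  | zero => simp [vxInf]
  | succ t ih => exact Or.inl ih

/-- On the same trajectories, every agent informed in meet-exchange is informed in
visit-exchange by the same round. -/
theorem mx_subset_vx (s : V) (x : A → ℕ → V) (t : ℕ) :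
    (mxInf s x t).1 ⊆ (vxInf s x t).2 := by
  induction t with
  | zero => exact fun g hg => hg
  | succ t ih =>
    rintro g ((hg | ⟨g', hg', h⟩) | ⟨-, h⟩)
    · exact Or.inl (ih hg)
    · exact Or.inr (Or.inr ⟨g', ih hg', h⟩)
    · refine Or.inr (Or.inl ?_)
      rw [h]
      exact vx_fst_source s x t

theorem vx_fst_mono (s : V) (x : A → ℕ → V) {t t' : ℕ} (h : t ≤ t') :
    (vxInf s x t).1 ⊆ (vxInf s x t').1 := by
  induction h with
  | refl => exact subset_rfl
  | step _ ih => exact ih.trans fun v hv => Or.inl hv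

theorem vx_snd_mono (s : V) (x : A → ℕ → V) {t t' : ℕ} (h : t ≤ t') :
    (vxInf s x t).2 ⊆ (vxInf s x t').2 := by
  induction h with
  | refl => exact subset_rfl
  | step _ ih => exact ih.trans fun v hv => Or.inl hv

theorem vx_univ_of_mx (s : V) (x : A → ℕ → V) (k T : ℕ)
    (hmx : (mxInf s x k).1 = Set.univ)
    (hvis : ∀ v, ∃ g, ∃ i < T, x g (k + i + 1) = v) :
    (vxInf s x (k + T)).1 = Set.univ := by
  refine Set.eq_univ_of_forall fun v => ?_
  obtain ⟨g, i, hi, hv⟩ := hvis v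
  have hg : g ∈ (vxInf s x (k + i)).2 :=
    vx_snd_mono s x (Nat.le_add_right k i) (mx_subset_vx s x k (hmx ▸ Set.mem_univ g))
  exact vx_fst_mono s x (show k + i + 1 ≤ k + T by omega) (Or.inr ⟨g, hg, hv⟩)

theorem mxInf_congr (s : V) (x y : A → ℕ → V) (k : ℕ)
    (h : ∀ g, ∀ t ≤ k, x g t = y g t) : mxInf s x k = mxInf s y k := by
  induction k with
  | zero => simp [mxInf, h]
  | succ k ih =>
    have h1 := ih fun g t ht => h g t (by omega)
    have h2 : ∀ g, x g (k + 1) = y g (k + 1) := fun g => h g _ le_rfl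
    simp only [mxInf, h1, h2]

end Coupling

/-! ### Expectations over the driving noise -/

section Noise

variable {V : Type*} {A : Type*}

/-- Trajectory of a single walk started at `x` and driven by `τ`. -/
def pos (x : V) (τ : ℕ → V → V) : ℕ → V
  | 0 => x
  | t + 1 => τ t (pos x τ t)

theorem pos_congr (x : V) (τ τ' : ℕ → V → V) (k : ℕ) (h : ∀ t < k, τ t = τ' t) :
    ∀ t ≤ k, pos x τ t = pos x τ' t := by
  intro t ht
  induction t with
  | zero => rfl
  | succ t ih => simp only [pos, ih (by omega), h t (by omega)]

theorem walk_congr (x0 : A → V) (τ τ' : ℕ → A → V → V) (k : ℕ) (h : ∀ t < k, τ t = τ' t)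
    (g : A) : ∀ t ≤ k, walk x0 τ g t = walk x0 τ' g t := by
  intro t ht
  induction t with
  | zero => rfl
  | succ t ih => simp only [walk, ih (by omega), h t (by omega)]

theorem walk_extAV (x0 : A → V) {k : ℕ} (σ : Fin k → A → V → V) (g : A) :
    walk x0 (extAV σ) g = pos (x0 g) (extV fun t => σ t g) := by
  funext t
  induction t with
  | zero => rfl
  | succ t ih =>
    simp only [walk, pos, ih, extAV, extV]
    split_ifs <;> rfl

theorem extV_snoc_lt {k : ℕ} (σ : Fin k → V → V) (ν : V → V) (t : ℕ) (ht : t < k) :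
    extV (Fin.snoc (α := fun _ => V → V) σ ν) t = extV σ t := by
  simp [extV, Fin.snoc, ht, Nat.lt_succ_of_lt ht]

theorem extV_snoc_last {k : ℕ} (σ : Fin k → V → V) (ν : V → V) :
    extV (Fin.snoc (α := fun _ => V → V) σ ν) k = ν := by
  simp [extV, Fin.snoc]

theorem extAV_snoc_lt {k : ℕ} (σ : Fin k → A → V → V) (ν : A → V → V) (t : ℕ) (ht : t < k) :
    extAV (Fin.snoc (α := fun _ => A → V → V) σ ν) t = extAV σ t := by
  simp [extAV, Fin.snoc, ht, Nat.lt_succ_of_lt ht]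

/-- Splitting off the last coordinate of an independent sequence. -/
theorem sum_snoc {N : Type*} [Fintype N] (q : N → ℝ) (k : ℕ) (F : (Fin (k + 1) → N) → ℝ) :
    ∑ σ : Fin (k + 1) → N, (∏ t, q (σ t)) * F σ
      = ∑ σ : Fin k → N, (∏ t, q (σ t)) *
          ∑ ν : N, q ν * F (Fin.snoc (α := fun _ => N) σ ν) := by
  rw [← (Fin.snocEquiv (fun _ => N)).sum_comp, Fintype.sum_prod_type, Finset.sum_comm]
  refine Finset.sum_congr rfl fun σ _ => ?_
  rw [Finset.mul_sum]
  refine Finset.sum_congr rfl fun ν _ => ?_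
  simp [Fin.snocEquiv, Fin.prod_univ_castSucc, mul_assoc]

variable [Fintype V] [Fintype A] (G : SimpleGraph V)

/-- Expectation of `F` over the trajectory of one stationary simple random walk run for
`K` rounds; the trajectory is constant after time `K`. -/
def oneExp (K : ℕ) (F : (ℕ → V) → ℝ) : ℝ :=
  ∑ x : V, ∑ σ : Fin K → V → V,
    statW G x * ((∏ t, ∏ v, nbrW G v (σ t v)) * F (pos x (extV σ)))

theorem nbrW_nonneg (v u : V) : 0 ≤ nbrW G v u := by
  unfold nbrW; split_ifs <;> positivity

theorem statW_nonneg (v : V) : 0 ≤ statW G v := by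
  unfold statW; positivity

theorem oneExp_mono (K : ℕ) {F F' : (ℕ → V) → ℝ} (h : ∀ x, F x ≤ F' x) :
    oneExp G K F ≤ oneExp G K F' := by
  unfold oneExp
  refine Finset.sum_le_sum fun x _ => Finset.sum_le_sum fun σ _ => ?_
  exact mul_le_mul_of_nonneg_left (mul_le_mul_of_nonneg_left (h _)
    (Finset.prod_nonneg fun t _ => Finset.prod_nonneg fun v _ => nbrW_nonneg G _ _))
    (statW_nonneg G x)

theorem oneExp_nonneg (K : ℕ) {F : (ℕ → V) → ℝ} (h : ∀ x, 0 ≤ F x) : 0 ≤ oneExp G K F := by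
  have h0 : oneExp G K (fun _ => 0) = 0 := by simp [oneExp]
  exact h0 ▸ oneExp_mono G K h

theorem oneExp_add (K : ℕ) (F F' : (ℕ → V) → ℝ) :
    oneExp G K (fun x => F x + F' x) = oneExp G K F + oneExp G K F' := by
  simp only [oneExp, mul_add, Finset.sum_add_distrib]

theorem oneExp_mul (K : ℕ) (c : ℝ) (F : (ℕ → V) → ℝ) :
    oneExp G K (fun x => c * F x) = c * oneExp G K F := by
  simp only [oneExp, Finset.mul_sum]
  refine Finset.sum_congr rfl fun x _ => Finset.sum_congr rfl fun σ _ => ?_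
  ring

theorem oneExp_sum (K : ℕ) {ι : Type*} (I : Finset ι) (F : ι → (ℕ → V) → ℝ) :
    oneExp G K (fun x => ∑ i ∈ I, F i x) = ∑ i ∈ I, oneExp G K (F i) := by
  classical
  induction I using Finset.induction_on with
  | empty => simp [oneExp]
  | insert i I hi ih => simp only [Finset.sum_insert hi, oneExp_add, ih]

/-- A single random map, with independent coordinates, moves the walk from `x` to a random
neighbor of `x`. -/
theorem sum_map_step (hG : ∀ v, ∑ u, nbrW G v u = 1) (x : V) (h : V → ℝ) :
    ∑ ν : V → V, (∏ v, nbrW G v (ν v)) * h (ν x) = ∑ u, nbrW G x u * h u := by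
  have key := Finset.prod_univ_sum (fun _ : V => (Finset.univ : Finset V))
    (fun v u => nbrW G v u * if v = x then h u else 1)
  rw [Fintype.piFinset_univ] at key
  have hl : ∏ v, ∑ u, nbrW G v u * (if v = x then h u else 1) = ∑ u, nbrW G x u * h u := by
    rw [Finset.prod_eq_single x]
    · simp
    · intro v _ hv
      simp [hv, hG]
    · simp
  rw [← hl, key]
  refine Finset.sum_congr rfl fun ν _ => ?_
  rw [Finset.prod_mul_distrib]
  simp

/-- Markov property: a function `F` of the first `K` steps times a function of the next position
is averaged by averaging over that one step. -/
theorem oneExp_step (hG : ∀ v, ∑ u, nbrW G v u = 1) (K : ℕ) (F : (ℕ → V) → ℝ) (h : V → ℝ)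
    (hF : ∀ x y : ℕ → V, (∀ t ≤ K, x t = y t) → F x = F y) :
    oneExp G (K + 1) (fun x => F x * h (x (K + 1)))
      = oneExp G K (fun x => F x * ∑ u, nbrW G (x K) u * h u) := by
  unfold oneExp
  refine Finset.sum_congr rfl fun x _ => ?_
  rw [← Finset.mul_sum, ← Finset.mul_sum]
  congr 1
  rw [sum_snoc (fun ν : V → V => ∏ v, nbrW G v (ν v)) K
    (fun σ => F (pos x (extV σ)) * h (pos x (extV σ) (K + 1)))]
  refine Finset.sum_congr rfl fun σ _ => ?_
  congr 1
  beta_reduce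
  rw [← sum_map_step G hG, Finset.mul_sum]
  refine Finset.sum_congr rfl fun ν _ => ?_
  have h1 := pos_congr x _ _ K (extV_snoc_lt σ ν)
  rw [hF _ _ h1]
  simp only [pos, extV_snoc_last, h1 K le_rfl]
  ring

theorem oneExp_marginal (hG : ∀ v, ∑ u, nbrW G v u = 1) (K m : ℕ) (F : (ℕ → V) → ℝ)
    (hF : ∀ x y : ℕ → V, (∀ t ≤ K, x t = y t) → F x = F y) :
    oneExp G (K + m) F = oneExp G K F := by
  induction m with
  | zero => rfl
  | succ m ih =>
    have := oneExp_step G hG (K + m) F (fun _ => 1)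
      (fun x y hxy => hF x y fun t ht => hxy t (by omega))
    simp only [mul_one, hG] at this
    rw [← ih, ← this, Nat.add_assoc]

/-! ### Several independent walks -/

theorem weight_nonneg (K : ℕ) (x0 : A → V) (σ : Fin K → A → V → V) :
    0 ≤ (∏ g, statW G (x0 g)) * ∏ t, ∏ g, ∏ v, nbrW G v (σ t g v) :=
  mul_nonneg (Finset.prod_nonneg fun _ _ => statW_nonneg G _)
    (Finset.prod_nonneg fun _ _ => Finset.prod_nonneg fun _ _ => Finset.prod_nonneg
      fun _ _ => nbrW_nonneg G _ _)

theorem walksProb_nonneg (K : ℕ) (E : (A → ℕ → V) → Prop) : 0 ≤ walksProb G K E := by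
  unfold walksProb
  refine Finset.sum_nonneg fun x0 _ => Finset.sum_nonneg fun σ _ => ?_
  split_ifs
  · exact weight_nonneg G K x0 σ
  · exact le_rfl

theorem walksProb_union (K : ℕ) (E E' : (A → ℕ → V) → Prop) (B : V → (A → ℕ → V) → Prop)
    (h : ∀ x, E x → E' x ∨ ∃ v, B v x) :
    walksProb G K E ≤ walksProb G K E' + ∑ v, walksProb G K (B v) := by
  unfold walksProb
  rw [Finset.sum_comm (s := (Finset.univ : Finset V)), ← Finset.sum_add_distrib]
  refine Finset.sum_le_sum fun x0 _ => ?_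
  rw [Finset.sum_comm (s := (Finset.univ : Finset V)), ← Finset.sum_add_distrib]
  refine Finset.sum_le_sum fun σ _ => ?_
  have hw := weight_nonneg G K x0 σ
  have hB : ∀ v, 0 ≤ if B v (walk x0 (extAV σ)) then
      (∏ g, statW G (x0 g)) * ∏ t, ∏ g, ∏ v, nbrW G v (σ t g v) else 0 := fun v => by
    split_ifs
    exacts [hw, le_rfl]
  have hs := Finset.sum_nonneg fun v (_ : v ∈ Finset.univ) => hB v
  by_cases h1 : E (walk x0 (extAV σ))
  · rw [if_pos h1]
    rcases h _ h1 with h2 | ⟨v, h2⟩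
    · rw [if_pos h2]
      linarith
    · have hv := Finset.single_le_sum (fun v _ => hB v) (Finset.mem_univ v)
      rw [if_pos h2] at hv
      refine hv.trans (le_add_of_nonneg_left ?_)
      split_ifs
      exacts [hw, le_rfl]
  · rw [if_neg h1]
    refine add_nonneg ?_ hs
    split_ifs
    exacts [hw, le_rfl]

theorem walksProb_marginal (hG : ∀ v, ∑ u, nbrW G v u = 1) (K m : ℕ)
    (E : (A → ℕ → V) → Prop)
    (hE : ∀ x y : A → ℕ → V, (∀ g, ∀ t ≤ K, x g t = y g t) → (E x ↔ E y)) :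
    walksProb G (K + m) E = walksProb G K E := by
  have htot : ∑ ν : A → V → V, ∏ g, ∏ v, nbrW G v (ν g v) = 1 := by
    have h1 : ∑ ν : V → V, ∏ v, nbrW G v (ν v) = 1 := by
      have := Finset.prod_univ_sum (fun _ : V => (Finset.univ : Finset V))
        (fun v u => nbrW G v u)
      rw [Fintype.piFinset_univ] at this
      rw [← this]
      simp [hG]
    have := Finset.prod_univ_sum (fun _ : A => (Finset.univ : Finset (V → V)))
      (fun _ ν => ∏ v, nbrW G v (ν v))
    rw [Fintype.piFinset_univ] at this
    rw [← this]
    simp [h1]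
  induction m with
  | zero => rfl
  | succ m ih =>
    rw [← ih, ← Nat.add_assoc]
    unfold walksProb
    refine Finset.sum_congr rfl fun x0 _ => ?_
    have := sum_snoc (fun ν : A → V → V => ∏ g, ∏ v, nbrW G v (ν g v)) (K + m)
      (fun σ => if E (walk x0 (extAV σ)) then ∏ g, statW G (x0 g) else 0)
    simp only [mul_ite, mul_zero] at this
    simp only [mul_comm (∏ g, statW G (x0 g))]
    rw [this]
    refine Finset.sum_congr rfl fun σ _ => ?_
    have hν : ∀ ν : A → V → V,
        E (walk x0 (extAV (Fin.snoc (α := fun _ => A → V → V) σ ν))) ↔ E (walk x0 (extAV σ)) :=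
      fun ν => hE _ _ fun g t ht =>
        walk_congr x0 _ _ (K + m) (extAV_snoc_lt σ ν) g t (by omega)
    simp only [hν]
    split_ifs
    · rw [← Finset.sum_mul, htot, one_mul]
    · simp

/-- Independence: an event that asks the same of each agent separately has the product
probability. -/
theorem walksProb_forall (K : ℕ) (Q : (ℕ → V) → Prop) :
    walksProb (A := A) G K (fun x => ∀ g, Q (x g))
      = oneExp G K (fun x => if Q x then 1 else 0) ^ Fintype.card A := by
  have key := Finset.prod_univ_sum
    (fun _ : A => (Finset.univ : Finset (V × (Fin K → V → V))))
    (fun _ p => if Q (pos p.1 (extV p.2)) then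
      statW G p.1 * ∏ t, ∏ v, nbrW G v (p.2 t v) else 0)
  rw [Fintype.piFinset_univ, Finset.prod_const, Finset.card_univ] at key
  have hone : oneExp G K (fun x => if Q x then 1 else 0)
      = ∑ p : V × (Fin K → V → V), if Q (pos p.1 (extV p.2)) then
          statW G p.1 * ∏ t, ∏ v, nbrW G v (p.2 t v) else 0 := by
    rw [Fintype.sum_prod_type]
    simp [oneExp]
  rw [hone, key]
  let e : (A → V × (Fin K → V → V)) ≃ (A → V) × (Fin K → A → V → V) :=
    (Equiv.arrowProdEquivProdArrow A (fun _ => V) (fun _ => Fin K → V → V)).trans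
      (Equiv.prodCongr (Equiv.refl _) (Equiv.piComm fun _ _ => V → V))
  unfold walksProb
  rw [← e.symm.sum_comp, Fintype.sum_prod_type]
  refine Finset.sum_congr rfl fun x0 _ => Finset.sum_congr rfl fun σ _ => ?_
  have hy : ∀ g, pos (e.symm (x0, σ) g).1 (extV (e.symm (x0, σ) g).2) = walk x0 (extAV σ) g :=
    fun g => (walk_extAV _ _ g).symm
  simp only [hy]
  rw [Finset.prod_ite_zero, Finset.prod_mul_distrib, Finset.prod_comm (t := Finset.univ)]
  simp only [Finset.mem_univ, true_imp_iff]
  split_ifs <;> rfl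

end Noise

/-! ### Regular graphs -/

section Regular

variable {V : Type*} [Fintype V] (G : SimpleGraph V) (d : ℕ)

theorem nbrW_le (hd : ∀ v, G.degree v = d) (v u : V) : nbrW G v u ≤ 1 / d := by
  unfold nbrW
  rw [hd]
  split_ifs
  · exact le_rfl
  · positivity

theorem sum_nbrW (hd : ∀ v, G.degree v = d) (hd0 : 0 < d) (v : V) : ∑ u, nbrW G v u = 1 := by
  unfold nbrW
  rw [← Finset.sum_filter, Finset.sum_const, hd, ← SimpleGraph.neighborFinset_eq_filter,
    SimpleGraph.card_neighborFinset_eq_degree, hd, nsmul_eq_mul]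
  field_simp

theorem nbrW_symm (hd : ∀ v, G.degree v = d) (v u : V) : nbrW G v u = nbrW G u v := by
  simp [nbrW, hd, G.adj_comm]

theorem statW_eq (hd : ∀ v, G.degree v = d) (hd0 : 0 < d) (v : V) :
    statW G v = 1 / Fintype.card V := by
  have : (0 : ℝ) < d := by exact_mod_cast hd0
  unfold statW
  simp only [hd, Finset.sum_const, Finset.card_univ, nsmul_eq_mul]
  field_simp

theorem oneExp_last (hd : ∀ v, G.degree v = d) (hd0 : 0 < d) (K : ℕ) (h : V → ℝ) :
    oneExp G K (fun x => h (x K)) = (∑ u, h u) / Fintype.card V := by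
  induction K generalizing h with
  | zero =>
    simp only [oneExp, statW_eq G d hd hd0, pos]
    simp [← Finset.mul_sum, div_eq_inv_mul]
  | succ K ih =>
    have := oneExp_step G (sum_nbrW G d hd hd0) K (fun _ => 1) h (fun _ _ _ => rfl)
    simp only [one_mul] at this
    rw [this, ih (fun v => ∑ u, nbrW G v u * h u), Finset.sum_comm]
    simp only [← Finset.sum_mul]
    congr 1
    refine Finset.sum_congr rfl fun u _ => ?_
    have h1 : ∑ i, nbrW G i u = 1 := by
      rw [← sum_nbrW G d hd hd0 u]
      exact Finset.sum_congr rfl fun i _ => nbrW_symm G d hd i u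
    rw [h1, one_mul]

/-- Stationarity: at each time the walk is at `v` with probability `1 / n`. -/
theorem oneExp_at (hd : ∀ v, G.degree v = d) (hd0 : 0 < d) (K t : ℕ) (ht : t ≤ K) (v : V) :
    oneExp G K (fun x => if x t = v then 1 else 0) = 1 / Fintype.card V := by
  obtain ⟨m, rfl⟩ := Nat.exists_eq_add_of_le ht
  rw [oneExp_marginal G (sum_nbrW G d hd hd0) t m _ (fun x y h => by rw [h t le_rfl]),
    oneExp_last G d hd hd0 t (fun u => if u = v then 1 else 0)]
  simp

theorem oneExp_one (hd : ∀ v, G.degree v = d) (hd0 : 0 < d) [Nonempty V] (K : ℕ) :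
    oneExp G K (fun _ => 1) = 1 := by
  have := oneExp_last G d hd hd0 K (fun _ => 1)
  rw [this]
  simp

/-- Visits to `v` at two distinct times have joint probability at most `1 / (n d)`: whatever
happened before, the last step hits `v` with probability at most `1 / d`. -/
theorem oneExp_pair (hd : ∀ v, G.degree v = d) (hd0 : 0 < d) (K i j : ℕ) (hij : i < j)
    (hj : j ≤ K) (v : V) :
    oneExp G K (fun x => (if x i = v then 1 else 0) * (if x j = v then 1 else 0))
      ≤ 1 / Fintype.card V * (1 / d) := by
  obtain ⟨m, rfl⟩ := Nat.exists_eq_add_of_le hj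
  obtain ⟨j, rfl⟩ : ∃ l, j = l + 1 := ⟨j - 1, by omega⟩
  rw [oneExp_marginal G (sum_nbrW G d hd hd0) (j + 1) m _
      (fun x y h => by rw [h i hij.le, h _ le_rfl]),
    oneExp_step G (sum_nbrW G d hd hd0) j (fun x => if x i = v then 1 else 0)
      (fun u => if u = v then 1 else 0) (fun x y h => by rw [h i (by omega)])]
  calc _ ≤ oneExp G j (fun x => 1 / d * if x i = v then 1 else 0) := by
        refine oneExp_mono G j fun x => ?_
        have := nbrW_le G d hd (x j) v
        split_ifs
        · simpa using this
        · simp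
    _ = 1 / Fintype.card V * (1 / d) := by
        rw [oneExp_mul, oneExp_at G d hd hd0 j i (by omega), mul_comm]

/-- Second moment bound: a stationary walk misses `v` during `T` consecutive rounds with
probability at most `1 - (T / n) / (1 + T / d)`. -/
theorem oneExp_miss (hd : ∀ v, G.degree v = d) (hd0 : 0 < d) [Nonempty V] (k T : ℕ) (v : V) :
    oneExp G (k + T) (fun x => if ∀ i < T, x (k + i + 1) ≠ v then 1 else 0)
      ≤ 1 - (T / Fintype.card V) / (1 + T / d) := by
  have hd' : (0 : ℝ) < d := by exact_mod_cast hd0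
  have hn : (0 : ℝ) < Fintype.card V := by exact_mod_cast Fintype.card_pos
  set n : ℝ := ((Fintype.card V : ℕ) : ℝ)
  set B : ℝ := 1 + T / d with hB
  have hB0 : 0 < B := by positivity
  let Y : ℕ → (ℕ → V) → ℝ := fun i x => if x (k + i + 1) = v then 1 else 0
  let N : (ℕ → V) → ℝ := fun x => ∑ i ∈ Finset.range T, Y i x
  have hEN : oneExp G (k + T) N = T / n := by
    have : ∀ i ∈ Finset.range T, oneExp G (k + T) (Y i) = 1 / n := fun i hi =>
      oneExp_at G d hd hd0 _ _ (by have := Finset.mem_range.1 hi; omega) v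
    rw [show N = fun x => ∑ i ∈ Finset.range T, Y i x from rfl, oneExp_sum,
      Finset.sum_congr rfl this]
    simp [div_eq_mul_inv]
  have hEN2 : oneExp G (k + T) (fun x => N x * N x) ≤ T / n * B := by
    have hYY : ∀ i ∈ Finset.range T, ∀ j ∈ Finset.range T,
        oneExp G (k + T) (fun x => Y i x * Y j x)
          ≤ (if i = j then 1 / n else 0) + 1 / n * (1 / d) := by
      intro i hi j hj
      rw [Finset.mem_range] at hi hj
      rcases lt_trichotomy i j with h | h | h
      · rw [if_neg h.ne, zero_add]
        exact oneExp_pair G d hd hd0 _ _ _ (by omega) (by omega) v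
      · subst h
        have h1 : (fun x => Y i x * Y i x) = Y i := by
          funext x
          simp only [Y]
          split_ifs <;> simp
        rw [h1, if_pos rfl,
          show oneExp G (k + T) (Y i) = 1 / n from oneExp_at G d hd hd0 _ _ (by omega) v]
        have : 0 ≤ 1 / n * (1 / d) := by positivity
        linarith
      · rw [if_neg h.ne', zero_add]
        simp only [mul_comm (Y i _)]
        exact oneExp_pair G d hd hd0 _ _ _ (by omega) (by omega) v
    have hexp : (fun x => N x * N x)
        = fun x => ∑ i ∈ Finset.range T, ∑ j ∈ Finset.range T, Y i x * Y j x := by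
      funext x
      simp only [N, Finset.sum_mul_sum]
    rw [hexp, oneExp_sum]
    simp only [oneExp_sum]
    refine (Finset.sum_le_sum fun i hi => Finset.sum_le_sum fun j hj => hYY i hi j hj).trans
      (le_of_eq ?_)
    have hdiag : ∀ i ∈ Finset.range T,
        ∑ j ∈ Finset.range T, ((if i = j then 1 / n else 0) + 1 / n * (1 / (d : ℝ)))
          = 1 / n + T * (1 / n * (1 / d)) := by
      intro i hi
      rw [Finset.sum_add_distrib, Finset.sum_ite_eq, if_pos hi]
      simp
    rw [Finset.sum_congr rfl hdiag, Finset.sum_const, Finset.card_range, nsmul_eq_mul, hB]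
    ring
  -- `1[N = 0] ≤ (1 - N / B)²`, since the right side is `1` when `N = 0` and a square otherwise
  have hpt : ∀ x, (if ∀ i < T, x (k + i + 1) ≠ v then (1 : ℝ) else 0)
      ≤ 1 + (-(2 / B) * N x + 1 / B ^ 2 * (N x * N x)) := by
    intro x
    have hsq : 1 + (-(2 / B) * N x + 1 / B ^ 2 * (N x * N x)) = (1 - N x / B) ^ 2 := by
      field_simp
      ring
    rw [hsq]
    split_ifs with h
    · have : N x = 0 := Finset.sum_eq_zero fun i hi => if_neg (h i (Finset.mem_range.1 hi))
      simp [this]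
    · positivity
  refine (oneExp_mono G (k + T) hpt).trans ?_
  rw [oneExp_add, oneExp_add, oneExp_mul, oneExp_mul, oneExp_one G d hd hd0, hEN]
  have h2 : 1 / B ^ 2 * oneExp G (k + T) (fun x => N x * N x) ≤ 1 / B ^ 2 * (T / n * B) :=
    mul_le_mul_of_nonneg_left hEN2 (by positivity)
  have h3 : 1 / B ^ 2 * (T / n * B) = T / n / B := by field_simp
  have h4 : -(2 / B) * (T / n) = -2 * (T / n / B) := by ring
  rw [h4]
  linarith

/-- The coupling bound before any choice of constants. -/
theorem mx_le_vx_add (hd : ∀ v, G.degree v = d) (hd0 : 0 < d) [Nonempty V] (s : V)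
    (a k T : ℕ) :
    mxProbLe G s a k ≤ vxProbLe G s a (k + T)
      + Fintype.card V * Real.exp (-(a * ((T / Fintype.card V) / (1 + T / d)))) := by
  have hm : mxProbLe G s a k
      = walksProb (A := Fin a) G (k + T) (fun x => (mxInf s x k).1 = Set.univ) :=
    (walksProb_marginal G (sum_nbrW G d hd hd0) k T _
      (fun x y h => by rw [mxInf_congr s x y k h])).symm
  rw [hm]
  refine (walksProb_union G (k + T) _ (fun x => (vxInf s x (k + T)).1 = Set.univ)
    (fun v x => ∀ g, ∀ i < T, x g (k + i + 1) ≠ v) ?_).trans ?_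
  · intro x hx
    by_cases h : ∀ v, ∃ g, ∃ i < T, x g (k + i + 1) = v
    · exact Or.inl (vx_univ_of_mx s x k T hx h)
    · push Not at h
      exact Or.inr h
  · refine add_le_add le_rfl ?_
    rw [← nsmul_eq_mul, ← Finset.card_univ, ← Finset.sum_const]
    refine Finset.sum_le_sum fun v _ => ?_
    rw [walksProb_forall G (k + T) (fun y => ∀ i < T, y (k + i + 1) ≠ v), Fintype.card_fin]
    have h0 := oneExp_nonneg G (k + T)
      (F := fun x => if ∀ i < T, x (k + i + 1) ≠ v then 1 else 0)
      (fun x => by split_ifs <;> norm_num)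
    rw [← mul_neg, Real.exp_nat_mul]
    have hmiss := oneExp_miss G d hd hd0 k T v
    have hle : 1 - (T / Fintype.card V : ℝ) / (1 + T / d)
        ≤ Real.exp (-((T / Fintype.card V : ℝ) / (1 + T / d))) := by
      have := Real.add_one_le_exp (-((T / Fintype.card V : ℝ) / (1 + T / d)))
      linarith
    rw [Finset.card_univ]
    convert pow_le_pow_left₀ h0 (hmiss.trans hle) a using 1
    congr!

end Regular

end Rumor

/-- For any constants `α, β, λ > 0` with `α·β` sufficiently large,
there is a constant `c > 0` such that for every connected `d`-regular graph `G` on `n`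
vertices with `d ≥ β ln n`, every source `s` and every `k ≥ 0`, when both protocols are
run with the same number `|A| ≥ α n` of agents,
`P[T_visitx(G,s) ≤ k + c ln n] ≥ P[T_meetx(G,s) ≤ k] − n^{−λ}`. -/
theorem visitx_le_meetx_regular (lam : ℝ) (hlam : 0 < lam) :
    ∃ M : ℝ, ∀ α β : ℝ, 0 < α → 0 < β → M ≤ α * β →
      ∃ c : ℝ, 0 < c ∧
        ∀ (V : Type) [Fintype V] (G : SimpleGraph V) (n d : ℕ),
          n = Fintype.card V → G.Connected → G.IsRegularOfDegree d →
          β * Real.log n ≤ (d : ℝ) →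
          ∀ (s : V) (a : ℕ), α * n ≤ (a : ℝ) →
          ∀ k : ℕ,
            Rumor.mxProbLe G s a k - (n : ℝ) ^ (-lam)
              ≤ Rumor.vxProbLe G s a (k + ⌊c * Real.log n⌋₊) := by
  refine ⟨2 * (1 + lam), fun α β hα hβ hM => ⟨β + 2, by positivity, ?_⟩⟩
  intro V _ G n d hn hconn hreg hdn s a ha k
  have : Nonempty V := ⟨s⟩
  have hd : ∀ v, G.degree v = d := fun v => by convert hreg v
  have hn1 : 1 ≤ n := hn ▸ Fintype.card_pos
  rcases hn1.eq_or_lt with h1 | hn2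
  · -- with a single vertex the degree, hence `statW`, is `0`, and there is at least one agent
    have hcard : Fintype.card V = 1 := by omega
    have hsub : Subsingleton V := (Fintype.card_le_one_iff_subsingleton).1 hcard.le
    have hs0 : ∀ v, Rumor.statW G v = 0 := fun v => by simp [Rumor.statW]
    have ha0 : 0 < a := by
      have : (0 : ℝ) < a := lt_of_lt_of_le (by rw [← h1]; simpa using hα) ha
      exact_mod_cast this
    have hmx : Rumor.mxProbLe G s a k = 0 := by
      unfold Rumor.mxProbLe Rumor.walksProb
      refine Finset.sum_eq_zero fun x0 _ => Finset.sum_eq_zero fun σ _ => ?_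
      rw [Finset.prod_eq_zero (Finset.mem_univ (⟨0, ha0⟩ : Fin a)) (hs0 _), zero_mul, ite_self]
    rw [hmx]
    have hv : 0 ≤ Rumor.vxProbLe G s a (k + ⌊(β + 2) * Real.log n⌋₊) :=
      Rumor.walksProb_nonneg G _ _
    have : 0 ≤ (n : ℝ) ^ (-lam) := by positivity
    linarith
  · have hnR : (2 : ℝ) ≤ n := by exact_mod_cast hn2
    have hlog2 : Real.log 2 ≤ Real.log n := Real.log_le_log (by norm_num) hnR
    have hlog : (1 : ℝ) / 2 < Real.log n := by linarith [Real.log_two_gt_d9]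
    set L : ℝ := β * Real.log n with hL
    have hL0 : 0 < L := by positivity
    have hd0 : 0 < d := by
      have : (0 : ℝ) < d := lt_of_lt_of_le hL0 hdn
      exact_mod_cast this
    set T : ℕ := ⌊(β + 2) * Real.log n⌋₊ with hT
    -- the summand `2` in `β + 2` absorbs the rounding, because `ln n > 1 / 2`
    have hTL : L ≤ T := by
      have := Nat.lt_floor_add_one ((β + 2) * Real.log n)
      rw [← hT] at this
      linarith
    have key := Rumor.mx_le_vx_add G d hd hd0 s a k T
    rw [← hn] at key
    have hdR : (0 : ℝ) < d := by exact_mod_cast hd0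
    have hTR : (0 : ℝ) < T := lt_of_lt_of_le hL0 hTL
    have hn0 : (0 : ℝ) < n := by linarith
    -- `T / (1 + T / d)` is half the harmonic mean of `T` and `d`, both at least `L`
    have hharm : L / 2 ≤ T / (1 + T / d) := by
      have : (T : ℝ) / (1 + T / d) = T * d / (d + T) := by field_simp
      rw [this, div_le_div_iff₀ (by norm_num) (by positivity)]
      nlinarith
    have hexp : (1 + lam) * Real.log n ≤ a * ((T / n) / (1 + T / d)) := by
      have e1 : (a : ℝ) * ((T / n) / (1 + T / d)) = a / n * (T / (1 + T / d)) := by ring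
      have e2 : α ≤ a / n := by rwa [le_div_iff₀ hn0]
      rw [e1]
      calc (1 + lam) * Real.log n ≤ α * (L / 2) := by rw [hL]; nlinarith
        _ ≤ a / n * (T / (1 + T / d)) :=
          mul_le_mul e2 hharm (by positivity) (by positivity)
    have hfin : (n : ℝ) * Real.exp (-(a * ((T / n) / (1 + T / d)))) ≤ (n : ℝ) ^ (-lam) := by
      calc (n : ℝ) * Real.exp (-(a * ((T / n) / (1 + T / d))))
          ≤ n * Real.exp (-((1 + lam) * Real.log n)) := by gcongr
        _ = (n : ℝ) ^ (-lam) := by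
          rw [Real.rpow_def_of_pos hn0]
          nth_rewrite 1 [← Real.exp_log hn0]
          rw [← Real.exp_add]
          congr 1
          ring
    linarith
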